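/- Weak comparison with a classical solution (supersolution version): Let Ω be a bounded domain in ℝ^N with N ≥ 2 and let H : Ω → ℝ be locally Lipschitz continuous. Let u : cl(Ω) → ℝ be lower semicontinuous on cl(Ω) and a viscosity supersolution of M(u) = NH in Ω, and let v ∈ C²(Ω) ∩ C(cl(Ω)) satisfy M(v) = NH pointwise in Ω. If u ≥ v on ∂Ω, then u ≥ v in Ω. -/

import Mathlib

open Metric Set Filter Topology MeasureTheory

/-- The mean curvature operator `M(w) = div (Dw / sqrt (1 + |Dw|²))`,
computed as the sum of the partial derivatives of the components of the
normalized gradient field. -/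
noncomputable def mcOp {N : ℕ} (w : EuclideanSpace ℝ (Fin N) → ℝ)
    (x : EuclideanSpace ℝ (Fin N)) : ℝ :=
  ∑ i : Fin N,
    fderiv ℝ (fun y => (Real.sqrt (1 + ‖gradient w y‖ ^ 2))⁻¹ * gradient w y i) x
      (EuclideanSpace.single i 1)

/-- `f` is locally Lipschitz continuous on the set `s`. -/
def LocLipschitzOn {N : ℕ} (s : Set (EuclideanSpace ℝ (Fin N)))
    (f : EuclideanSpace ℝ (Fin N) → ℝ) : Prop :=
  ∀ x ∈ s, ∃ K : NNReal, ∃ t ∈ 𝓝[s] x, LipschitzOnWith K f t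

/-- `u` is a viscosity supersolution of `M(u) = N H` on the open set `U`. -/
def IsViscositySupersol {N : ℕ} (U : Set (EuclideanSpace ℝ (Fin N)))
    (H u : EuclideanSpace ℝ (Fin N) → ℝ) : Prop :=
  ∀ φ : EuclideanSpace ℝ (Fin N) → ℝ, ContDiffOn ℝ 2 φ U →
    ∀ x ∈ U, IsLocalMinOn (fun y => u y - φ y) U x → mcOp φ x ≤ N * H x

/-- `v` is a viscosity subsolution of `M(v) = N H` on the open set `U`. -/
def IsViscositySubsol {N : ℕ} (U : Set (EuclideanSpace ℝ (Fin N)))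
    (H v : EuclideanSpace ℝ (Fin N) → ℝ) : Prop :=
  ∀ φ : EuclideanSpace ℝ (Fin N) → ℝ, ContDiffOn ℝ 2 φ U →
    ∀ x ∈ U, IsLocalMaxOn (fun y => v y - φ y) U x → mcOp φ x ≥ N * H x

noncomputable def nPhi {N : ℕ} (p : EuclideanSpace ℝ (Fin N)) : EuclideanSpace ℝ (Fin N) :=
  (Real.sqrt (1 + ‖p‖ ^ 2))⁻¹ • p

lemma nPhi_contDiff {N : ℕ} : ContDiff ℝ 2 (nPhi (N := N)) := by
  unfold nPhi
  have h1 : ContDiff ℝ 2 (fun p : EuclideanSpace ℝ (Fin N) => 1 + ‖p‖ ^ 2) :=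
    contDiff_const.add (contDiff_id.norm_sq ℝ)
  have hpos : ∀ p : EuclideanSpace ℝ (Fin N), 1 + ‖p‖ ^ 2 ≠ 0 := fun p => by positivity
  have h2 : ContDiff ℝ 2 (fun p : EuclideanSpace ℝ (Fin N) => Real.sqrt (1 + ‖p‖ ^ 2)) :=
    h1.sqrt hpos
  exact (h2.inv (fun p => by positivity)).smul contDiff_id

lemma nPhi_fderiv_pos {N : ℕ} (i : Fin N) (q : EuclideanSpace ℝ (Fin N)) :
    0 < (fderiv ℝ nPhi q (EuclideanSpace.single i 1)) i := by
  have hpos : 0 < 1 + ‖q‖ ^ 2 := by positivity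
  have hn : HasFDerivAt (fun p : EuclideanSpace ℝ (Fin N) => 1 + ‖p‖ ^ 2)
      (2 • (innerSL ℝ q)) q := by
    have := ((hasStrictFDerivAt_norm_sq q).hasFDerivAt).const_add (1:ℝ)
    exact this
  have h2 := hn.sqrt hpos.ne'
  have h3 := (hasDerivAt_inv (Real.sqrt_pos.2 hpos).ne').comp_hasFDerivAt q h2
  have h4 := h3.smul (hasFDerivAt_id q)
  have h5 : HasFDerivAt nPhi _ q := h4
  rw [h5.fderiv]
  have hsq : Real.sqrt (1 + ‖q‖ ^ 2) ^ 2 = 1 + ‖q‖ ^ 2 := Real.sq_sqrt hpos.le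
  have hr := Real.sqrt_pos.2 hpos
  set r := Real.sqrt (1 + ‖q‖ ^ 2) with hrdef
  have hqi : q i ^ 2 ≤ ‖q‖ ^ 2 := by
    rw [EuclideanSpace.norm_sq_eq]
    have := Finset.single_le_sum (f := fun j => ‖q j‖ ^ 2) (fun j _ => by positivity) (Finset.mem_univ i)
    simpa using this
  have : r⁻¹ - r⁻¹ ^ 3 * q i ^ 2 = r⁻¹ ^ 3 * (r ^ 2 - q i ^ 2) := by field_simp
  have hp : 0 < r⁻¹ - r⁻¹ ^ 3 * q i ^ 2 := by
    rw [this]; apply mul_pos (by positivity); rw [hsq]; linarith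
  convert hp using 1
  simp [EuclideanSpace.inner_single_right, ← hrdef]
  field_simp
  ring

lemma mcOp_eq {N : ℕ} (w : EuclideanSpace ℝ (Fin N) → ℝ) (x : EuclideanSpace ℝ (Fin N))
    (D : EuclideanSpace ℝ (Fin N) →L[ℝ] EuclideanSpace ℝ (Fin N))
    (h : HasFDerivAt (gradient w) D x) :
    mcOp w x = ∑ i, (fderiv ℝ nPhi (gradient w x) (D (EuclideanSpace.single i 1))) i := by
  unfold mcOp
  refine Finset.sum_congr rfl fun i _ => ?_
  have h1 : HasFDerivAt nPhi (fderiv ℝ nPhi (gradient w x)) (gradient w x) :=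
    (nPhi_contDiff.differentiable (by norm_num) _).hasFDerivAt
  have h2 := h1.comp x h
  have h3 := (EuclideanSpace.proj (𝕜 := ℝ) i).hasFDerivAt.comp x h2
  have h4 : HasFDerivAt (fun y => (Real.sqrt (1 + ‖gradient w y‖ ^ 2))⁻¹ * gradient w y i) _ x := h3
  rw [h4.fderiv]
  simp

lemma nPhi_lip {N : ℕ} (R : ℝ) : ∃ L : ℝ, 0 ≤ L ∧ ∀ p q : EuclideanSpace ℝ (Fin N),
    ‖p‖ ≤ R → ‖q‖ ≤ R → ‖fderiv ℝ nPhi q - fderiv ℝ nPhi p‖ ≤ L * ‖q - p‖ := by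
  have hc : ContDiff ℝ 1 (fderiv ℝ (nPhi (N := N))) :=
    nPhi_contDiff.fderiv_right (by norm_num)
  have hcc : Continuous (fderiv ℝ (fderiv ℝ (nPhi (N := N)))) := hc.continuous_fderiv (by norm_num)
  obtain ⟨C, hC⟩ := (isCompact_closedBall (0 : EuclideanSpace ℝ (Fin N)) R).exists_bound_of_continuousOn
    (f := fderiv ℝ (fderiv ℝ (nPhi (N := N)))) hcc.continuousOn
  refine ⟨max C 0, le_max_right _ _, fun p q hp hq => ?_⟩
  exact (convex_closedBall (0 : EuclideanSpace ℝ (Fin N)) R).norm_image_sub_le_of_norm_fderiv_le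
    (fun x _ => hc.differentiable (by norm_num) x)
    (fun x hx => (hC x hx).trans (le_max_left _ _)) (by simpa using hp) (by simpa using hq)

lemma nPhi_low {N : ℕ} (i : Fin N) (R : ℝ) : ∃ a : ℝ, 0 < a ∧ ∀ q : EuclideanSpace ℝ (Fin N),
    ‖q‖ ≤ R → a ≤ (fderiv ℝ nPhi q (EuclideanSpace.single i 1)) i := by
  have hc : Continuous (fderiv ℝ (nPhi (N := N))) := nPhi_contDiff.continuous_fderiv (by norm_num)
  have hc2 : Continuous (fun q : EuclideanSpace ℝ (Fin N) =>
      (fderiv ℝ nPhi q (EuclideanSpace.single i 1)) i) :=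
    (EuclideanSpace.proj (𝕜 := ℝ) i).continuous.comp (hc.clm_apply continuous_const)
  obtain ⟨a, ha, h⟩ := (isCompact_closedBall (0 : EuclideanSpace ℝ (Fin N)) R).exists_forall_le'
    hc2.continuousOn (a := 0) (fun q _ => nPhi_fderiv_pos i q)
  exact ⟨a, ha, fun q hq => h q (by simpa using hq)⟩

lemma gradient_contDiffOn {N : ℕ} {Ω : Set (EuclideanSpace ℝ (Fin N))} (hΩo : IsOpen Ω)
    {v : EuclideanSpace ℝ (Fin N) → ℝ} (hv : ContDiffOn ℝ 2 v Ω) :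
    ContDiffOn ℝ 1 (gradient v) Ω := by
  have := hv.fderiv_of_isOpen hΩo (m := 1) (by norm_num)
  exact (InnerProductSpace.toDual ℝ (EuclideanSpace ℝ (Fin N))).symm.contDiff.comp_contDiffOn this

lemma gradient_pert {N : ℕ} (i : Fin N) (lam eps : ℝ) {v : EuclideanSpace ℝ (Fin N) → ℝ}
    {y : EuclideanSpace ℝ (Fin N)} (hv : DifferentiableAt ℝ v y) :
    gradient (fun z => v z + eps * Real.exp (lam * z i)) y =
      gradient v y + (eps * lam * Real.exp (lam * y i)) • EuclideanSpace.single i 1 := by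
  have h1 : HasFDerivAt (fun z : EuclideanSpace ℝ (Fin N) => z i)
    (EuclideanSpace.proj (𝕜 := ℝ) i) y := (EuclideanSpace.proj (𝕜 := ℝ) i).hasFDerivAt
  have h2 := ((h1.const_mul lam).exp).const_mul eps
  have h3 := hv.hasGradientAt.hasFDerivAt.add h2
  apply HasGradientAt.gradient
  rw [hasGradientAt_iff_hasFDerivAt]
  have heq : (InnerProductSpace.toDual ℝ (EuclideanSpace ℝ (Fin N)))
      (gradient v y + (eps * lam * Real.exp (lam * y i)) • EuclideanSpace.single i 1) =
    (InnerProductSpace.toDual ℝ (EuclideanSpace ℝ (Fin N))) (gradient v y) +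
      eps • Real.exp (lam * y i) • lam • EuclideanSpace.proj (𝕜 := ℝ) i := by
    ext z
    simp [EuclideanSpace.inner_single_left, inner_smul_left, inner_add_left]
    ring
  rw [heq]
  exact h3

lemma mcOp_pert {N : ℕ} (i : Fin N) (lam eps : ℝ) {Ω : Set (EuclideanSpace ℝ (Fin N))}
    (hΩo : IsOpen Ω)
    {v : EuclideanSpace ℝ (Fin N) → ℝ} (hv : ContDiffOn ℝ 2 v Ω)
    {x : EuclideanSpace ℝ (Fin N)} (hx : x ∈ Ω) (s : ℝ)
    (hs : s = eps * lam * Real.exp (lam * x i)) :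
    mcOp (fun z => v z + eps * Real.exp (lam * z i)) x =
      (∑ j, (fderiv ℝ nPhi (gradient v x + s • EuclideanSpace.single i 1)
        (fderiv ℝ (gradient v) x (EuclideanSpace.single j 1))) j) +
      lam * s * (fderiv ℝ nPhi (gradient v x + s • EuclideanSpace.single i 1)
        (EuclideanSpace.single i 1)) i := by
  have hg : DifferentiableAt ℝ (gradient v) x :=
    ((gradient_contDiffOn hΩo hv).contDiffAt (hΩo.mem_nhds hx)).differentiableAt (by norm_num)
  have hev : gradient (fun z => v z + eps * Real.exp (lam * z i)) =ᶠ[𝓝 x]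
      fun y => gradient v y + (eps * lam * Real.exp (lam * y i)) • EuclideanSpace.single i 1 := by
    filter_upwards [hΩo.mem_nhds hx] with y hy
    exact gradient_pert i lam eps
      ((hv.contDiffAt (hΩo.mem_nhds hy)).differentiableAt (by norm_num))
  have h1 : HasFDerivAt (fun z : EuclideanSpace ℝ (Fin N) => z i)
    (EuclideanSpace.proj (𝕜 := ℝ) i) x := (EuclideanSpace.proj (𝕜 := ℝ) i).hasFDerivAt
  have h2 := (((h1.const_mul lam).exp).const_mul (eps * lam)).smul_const
    (EuclideanSpace.single i (1:ℝ))
  have h3 := (hg.hasFDerivAt.add h2).congr_of_eventuallyEq hev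
  rw [mcOp_eq _ x _ h3, hev.self_of_nhds]
  beta_reduce
  rw [← hs]
  simp only [ContinuousLinearMap.add_apply, map_add, PiLp.add_apply, Finset.sum_add_distrib]
  congr 1
  rw [Finset.sum_eq_single i]
  · simp [hs]; left; ring
  · intro j _ hj
    simp [hj.symm]
  · simp

/-- **Weak comparison with a classical solution (supersolution version)**:
a lower semicontinuous viscosity supersolution of `M(u) = N H` on a bounded
domain dominates any classical solution that it dominates on the boundary. -/
theorem weak_comparison_supersolution_classical {N : ℕ} (hN : 2 ≤ N)
    (Ω : Set (EuclideanSpace ℝ (Fin N))) (hΩo : IsOpen Ω) (hΩc : IsConnected Ω)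
    (hΩb : Bornology.IsBounded Ω)
    (H : EuclideanSpace ℝ (Fin N) → ℝ) (hH : LocLipschitzOn Ω H)
    (u v : EuclideanSpace ℝ (Fin N) → ℝ)
    (hu_lsc : LowerSemicontinuousOn u (closure Ω)) (hu : IsViscositySupersol Ω H u)
    (hv_c2 : ContDiffOn ℝ 2 v Ω) (hv_cont : ContinuousOn v (closure Ω))
    (hv_sol : ∀ x ∈ Ω, mcOp v x = N * H x)
    (hbdry : ∀ x ∈ frontier Ω, v x ≤ u x) :
    ∀ x ∈ Ω, v x ≤ u x := by
  by_contra! hcon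
  obtain ⟨x0, hx0, hlt⟩ := hcon
  let i : Fin N := ⟨0, by omega⟩
  have hcpt : IsCompact (closure Ω) := hΩb.isCompact_closure
  have hlsc : LowerSemicontinuousOn (fun y => u y + -v y) (closure Ω) :=
    hu_lsc.add hv_cont.neg.lowerSemicontinuousOn
  set m := u x0 - v x0 with hm
  have hm0 : m < 0 := by linarith
  -- the sublevel set
  set K := closure Ω ∩ (fun y => u y + -v y) ⁻¹' Iic (m / 2) with hK
  have hKc : IsCompact K := by
    obtain ⟨F, hF, hFe⟩ := lowerSemicontinuousOn_iff_preimage_Iic.1 hlsc (m / 2)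
    rw [hK, hFe]
    exact hcpt.inter_right hF
  have hKΩ : K ⊆ Ω := by
    rintro y ⟨hy, hy2⟩
    by_contra hyn
    have : y ∈ frontier Ω := by rw [frontier, hΩo.interior_eq]; exact ⟨hy, hyn⟩
    have := hbdry y this
    simp only [mem_preimage, mem_Iic] at hy2
    linarith
  have hgc := gradient_contDiffOn hΩo hv_c2
  obtain ⟨R, hR⟩ := hKc.exists_bound_of_continuousOn (hgc.continuousOn.mono hKΩ)
  obtain ⟨C, hC⟩ := hKc.exists_bound_of_continuousOn
    ((hgc.continuousOn_fderiv_of_isOpen hΩo (by norm_num)).mono hKΩ)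
  obtain ⟨L, hL0, hL⟩ := nPhi_lip (N := N) (R + 1)
  obtain ⟨a, ha0, ha⟩ := nPhi_low i (R + 1)
  set C' := max C 0 with hC'
  have hC'0 : 0 ≤ C' := le_max_right _ _
  set lam := (N * (L * C') + 1) / a with hlam
  have hlam0 : 0 < lam := by positivity
  obtain ⟨B, hB⟩ := hcpt.exists_bound_of_continuousOn
    (f := fun z : EuclideanSpace ℝ (Fin N) => Real.exp (lam * z i)) (by fun_prop)
  have hB' : ∀ z ∈ closure Ω, Real.exp (lam * z i) ≤ B := fun z hz =>
    (le_abs_self _).trans (hB z hz)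
  have hBpos : 0 < B := (Real.exp_pos _).trans_le (hB' x0 (subset_closure hx0))
  set eps := min (-m / 2 / B) (1 / (lam * B)) with heps
  have heps0 : 0 < eps := by
    apply lt_min
    · apply div_pos _ hBpos; linarith
    · positivity
  have he1 : eps * B ≤ -m / 2 := by
    rw [← le_div_iff₀ hBpos]; exact min_le_left _ _
  have he2 : eps * (lam * B) ≤ 1 := by
    rw [← le_div_iff₀ (by positivity)]; exact min_le_right _ _
  have hlsc2 : LowerSemicontinuousOn
      (fun y => (u y + -v y) + -(eps * Real.exp (lam * y i))) (closure Ω) := by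
    apply hlsc.add
    apply ContinuousOn.lowerSemicontinuousOn
    fun_prop
  obtain ⟨x, hx, hmin⟩ := hlsc2.exists_isMinOn ⟨x0, subset_closure hx0⟩ hcpt
  have hmin' := isMinOn_iff.1 hmin
  have hxK : x ∈ K := by
    refine ⟨hx, ?_⟩
    have h1 := hmin' x0 (subset_closure hx0)
    have h2 : eps * Real.exp (lam * x i) ≤ eps * B := by gcongr; exact hB' x hx
    have h3 : 0 < eps * Real.exp (lam * x0 i) := by positivity
    simp only [mem_preimage, mem_Iic]
    linarith
  have hxΩ := hKΩ hxK
  set s := eps * lam * Real.exp (lam * x i) with hs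
  have hs0 : 0 < s := by positivity
  have hs1 : s ≤ 1 := by
    refine le_trans ?_ he2
    rw [hs, mul_assoc]
    gcongr
    exact hB' x hx
  have hpert := mcOp_pert i lam eps hΩo hv_c2 hxΩ s hs
  have hvis := hu (fun z => v z + eps * Real.exp (lam * z i))
    (hv_c2.add (by fun_prop)) x hxΩ (by
      apply IsMinOn.localize
      rw [isMinOn_iff]
      intro y hy
      have := hmin' y (subset_closure hy)
      linarith)
  rw [← hv_sol x hxΩ, hpert, mcOp_eq v x (fderiv ℝ (gradient v) x)
    ((hgc.contDiffAt (hΩo.mem_nhds hxΩ)).differentiableAt (by norm_num)).hasFDerivAt] at hvis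
  set p := gradient v x with hp
  set e : EuclideanSpace ℝ (Fin N) := EuclideanSpace.single i 1 with he
  have hen : ‖e‖ = 1 := by simp [he]
  have hpR : ‖p‖ ≤ R := hR x hxK
  have hse : ‖s • e‖ = s := by rw [norm_smul, hen, mul_one, Real.norm_of_nonneg hs0.le]
  have hqR : ‖p + s • e‖ ≤ R + 1 := (norm_add_le _ _).trans (by rw [hse]; linarith)
  have hA := ha _ hqR
  have hLip := hL p (p + s • e) (by linarith) hqR
  rw [add_sub_cancel_left, hse] at hLip
  have hterm : ∀ j : Fin N, -(L * s * C') ≤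
      (fderiv ℝ nPhi (p + s • e) (fderiv ℝ (gradient v) x (EuclideanSpace.single j 1))) j -
      (fderiv ℝ nPhi p (fderiv ℝ (gradient v) x (EuclideanSpace.single j 1))) j := by
    intro j
    set d := fderiv ℝ (gradient v) x (EuclideanSpace.single j 1) with hd
    have hdC : ‖d‖ ≤ C' := by
      have := (fderiv ℝ (gradient v) x).le_opNorm (EuclideanSpace.single j 1)
      simp only [EuclideanSpace.norm_single, norm_one, mul_one] at this
      exact (this.trans (hC x hxK)).trans (le_max_left _ _)
    have h1 : ‖(fderiv ℝ nPhi (p + s • e) - fderiv ℝ nPhi p) d‖ ≤ L * s * C' :=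
      (ContinuousLinearMap.le_opNorm _ _).trans (by gcongr)
    have h2 := (PiLp.norm_apply_le ((fderiv ℝ nPhi (p + s • e) - fderiv ℝ nPhi p) d) j).trans h1
    have h3 := (abs_le.1 h2).1
    simpa using h3
  have hsum := Finset.sum_le_sum (s := Finset.univ) (fun j _ => hterm j)
  rw [Finset.sum_sub_distrib] at hsum
  simp only [Finset.sum_const, Finset.card_univ, Fintype.card_fin, nsmul_eq_mul] at hsum
  have hla : lam * s * a ≤ lam * s * (fderiv ℝ nPhi (p + s • e) e) i := by gcongr
  have hla2 : lam * s * a = (N * (L * C') + 1) * s := by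
    rw [hlam]; field_simp
  nlinarith
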